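/- arXiv:1005.0670 — 4 statements merged into one kernel-verified Lean document; each statement's English description precedes it below -/
import Mathlib

section
/- Let x be a real number with 0 < x ≤ 1 and for each natural number i set r_i = 13·2^{i/2}. Then for every natural number k, ∏_{i=0}^{k} (1 + x/r_i) ≤ 1 + x/3. -/
/-!
Since `1 + t ≤ exp t`, the product is at most the exponential of a geometric series with sum
`x / 13 * (2 + √2) ≤ 7 / 26 * x`. On the other hand `log (1 + t) ≥ 2 * t / (t + 2) ≥ 6 / 7 * t` for
`0 ≤ t ≤ 1 / 3`, so `log (1 + x / 3) ≥ 2 / 7 * x`, and `7 / 26 < 2 / 7`.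
-/

lemma prod_one_add_mul_pow_le_exp {a q : ℝ} (ha : 0 ≤ a) (hq0 : 0 ≤ q) (hq1 : q < 1)
    (s : Finset ℕ) : ∏ i ∈ s, (1 + a * q ^ i) ≤ Real.exp (a * (1 - q)⁻¹) := by
  have hsum : ∑ i ∈ s, a * q ^ i ≤ a * (1 - q)⁻¹ :=
    sum_le_hasSum s (fun i _ ↦ by positivity) ((hasSum_geometric_of_lt_one hq0 hq1).mul_left a)
  exact (Real.prod_one_add_le_exp_sum s fun i ↦ by positivity).trans (Real.exp_le_exp.mpr hsum)

lemma exp_mul_le_one_add {t b : ℝ} (ht : 0 ≤ t) (htb : t ≤ b) :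
    Real.exp (2 / (b + 2) * t) ≤ 1 + t := by
  rw [← Real.le_log_iff_exp_le (by positivity)]
  calc 2 / (b + 2) * t ≤ 2 / (t + 2) * t := by gcongr
    _ = 2 * t / (t + 2) := div_mul_eq_mul_div _ _ _
    _ ≤ Real.log (1 + t) := Real.le_log_one_add_of_nonneg ht

lemma inv_one_sub_inv_sqrt_two : (1 - (√2)⁻¹)⁻¹ = 2 + √2 := by
  have hsq : √2 ^ 2 = 2 := Real.sq_sqrt zero_le_two
  refine inv_eq_of_mul_eq_one_right ?_
  field_simp
  linear_combination hsq

theorem prod_one_add_le (x : ℝ) (hx0 : 0 < x) (hx1 : x ≤ 1) (k : ℕ) :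
    ∏ i ∈ Finset.range (k + 1), (1 + x / (13 * Real.sqrt 2 ^ i)) ≤ 1 + x / 3 := by
  have hq : (√2)⁻¹ < 1 := inv_lt_one_of_one_lt₀ Real.one_lt_sqrt_two
  have hexponent : x / 13 * (2 + √2) ≤ 2 / (1 / 3 + 2) * (x / 3) := by
    linarith [mul_le_mul_of_nonneg_left Real.sqrt_two_lt_three_halves.le hx0.le]
  calc ∏ i ∈ Finset.range (k + 1), (1 + x / (13 * √2 ^ i))
      = ∏ i ∈ Finset.range (k + 1), (1 + x / 13 * (√2)⁻¹ ^ i) := by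
        simp only [inv_pow, ← div_eq_mul_inv, div_div]
    _ ≤ Real.exp (x / 13 * (1 - (√2)⁻¹)⁻¹) :=
        prod_one_add_mul_pow_le_exp (by positivity) (by positivity) hq _
    _ = Real.exp (x / 13 * (2 + √2)) := by rw [inv_one_sub_inv_sqrt_two]
    _ ≤ Real.exp (2 / (1 / 3 + 2) * (x / 3)) := Real.exp_le_exp.mpr hexponent
    _ ≤ 1 + x / 3 := exp_mul_le_one_add (by positivity) (by linarith)
end

section
/- Let x be a real number with 0 < x ≤ 1 and for each natural number i set r_i = 13·2^{i/2}. Then for every natural number k, ∏_{i=0}^{k} (1 − x/r_i) ≥ 1 − x/3. -/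
/-!
Weierstrass' product inequality `∏ (1 - aᵢ) ≥ 1 - ∑ aᵢ` for `aᵢ ∈ [0, 1]` reduces the claim to a
geometric sum: `∑ 1 / rᵢ` is at most `1 / (13 (1 - 1/√2)) = (2 + √2) / 13 < 1 / 3`.
-/

section Weierstrass

variable {ι R : Type*} [CommRing R] [PartialOrder R] [IsOrderedRing R]

theorem one_sub_sum_le_prod_one_sub {s : Finset ι} {f : ι → R} (hf₀ : ∀ i ∈ s, 0 ≤ f i)
    (hf₁ : ∀ i ∈ s, f i ≤ 1) : 1 - ∑ i ∈ s, f i ≤ ∏ i ∈ s, (1 - f i) := by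
  induction s using Finset.cons_induction with
  | empty => simp
  | cons a s ha ih =>
    rw [Finset.forall_mem_cons] at hf₀ hf₁
    have prod_le_one : ∏ i ∈ s, (1 - f i) ≤ 1 :=
      Finset.prod_le_one (fun i hi ↦ sub_nonneg.2 (hf₁.2 i hi))
        fun i hi ↦ sub_le_self 1 (hf₀.2 i hi)
    rw [Finset.sum_cons, Finset.prod_cons]
    calc 1 - (f a + ∑ i ∈ s, f i) = (1 - ∑ i ∈ s, f i) - f a := by ring
      _ ≤ ∏ i ∈ s, (1 - f i) - f a * ∏ i ∈ s, (1 - f i) :=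
        sub_le_sub (ih hf₀.2 hf₁.2) (mul_le_of_le_one_right hf₀.1 prod_le_one)
      _ = (1 - f a) * ∏ i ∈ s, (1 - f i) := by ring

end Weierstrass

theorem one_sub_div_le_prod_one_sub_mul_pow {K : Type*} [Field K] [LinearOrder K]
    [IsStrictOrderedRing K] {y q : K} (hy₀ : 0 ≤ y) (hy₁ : y ≤ 1) (hq₀ : 0 ≤ q) (hq₁ : q < 1)
    (n : ℕ) : 1 - y / (1 - q) ≤ ∏ i ∈ Finset.range n, (1 - y * q ^ i) := by
  have geom_sum_le : ∑ i ∈ Finset.range n, q ^ i ≤ 1 / (1 - q) := by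
    simpa using geom_sum_Ico_le_of_lt_one (m := 0) (n := n) hq₀ hq₁
  calc 1 - y / (1 - q) = 1 - y * (1 / (1 - q)) := by rw [mul_one_div]
    _ ≤ 1 - y * ∑ i ∈ Finset.range n, q ^ i := by gcongr
    _ = 1 - ∑ i ∈ Finset.range n, y * q ^ i := by rw [Finset.mul_sum]
    _ ≤ ∏ i ∈ Finset.range n, (1 - y * q ^ i) :=
      one_sub_sum_le_prod_one_sub (fun i _ ↦ mul_nonneg hy₀ (pow_nonneg hq₀ i))
        fun i _ ↦ mul_le_one₀ hy₁ (pow_nonneg hq₀ i) (pow_le_one₀ hq₀ hq₁.le)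

-- `10 / 13` is the ratio `q` at which the geometric sum `1 / (1 - q)` equals `13 / 3`.
theorem inv_sqrt_two_le_ten_div_thirteen : (√2)⁻¹ ≤ (10 / 13 : ℝ) := by
  have : (13 / 10 : ℝ) ≤ √2 := Real.le_sqrt_of_sq_le (by norm_num)
  exact inv_le_of_inv_le₀ (by norm_num) (by rwa [inv_div])

theorem prod_one_sub_ge_general (x : ℝ) (hx₀ : 0 ≤ x) (hx₁ : x ≤ 13) (k : ℕ) :
    ∏ i ∈ Finset.range (k + 1), (1 - x / (13 * Real.sqrt 2 ^ i)) ≥ 1 - x / 3 := by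
  have ratio_lt_one : (√2)⁻¹ < 1 := inv_sqrt_two_le_ten_div_thirteen.trans_lt (by norm_num)
  calc 1 - x / 3 = 1 - x / 13 / (1 - 10 / 13) := by ring
    _ ≤ 1 - x / 13 / (1 - (√2)⁻¹) := by
      gcongr
      exact inv_sqrt_two_le_ten_div_thirteen
    _ ≤ ∏ i ∈ Finset.range (k + 1), (1 - x / 13 * (√2)⁻¹ ^ i) :=
      one_sub_div_le_prod_one_sub_mul_pow (by positivity) (by linarith) (by positivity)
        ratio_lt_one (k + 1)
    _ = ∏ i ∈ Finset.range (k + 1), (1 - x / (13 * √2 ^ i)) := by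
      simp only [inv_pow, ← div_eq_mul_inv, div_div]

theorem prod_one_sub_ge (x : ℝ) (hx0 : 0 < x) (hx1 : x ≤ 1) (k : ℕ) :
    ∏ i ∈ Finset.range (k + 1), (1 - x / (13 * Real.sqrt 2 ^ i)) ≥ 1 - x / 3 :=
  prod_one_sub_ge_general x hx0.le (by linarith) k
end

section
/- Let j ≤ K be natural numbers and let ε be a real number with 0 < ε ≤ 1. Let x_j, …, x_K, f_j, …, f_K and y_K be nonnegative real numbers satisfying y_K + f_K = x_K, and suppose that for every i with j ≤ i ≤ K−1 we have 2·x_{i+1} + f_i ≤ (1 + ε/(13·2^{i/2}))·x_i. Then 2^{K−j}·y_K + ∑_{i=j}^{K} 2^{i−j}·f_i ≤ (1 + (ε/3)·2^{−j/2})·x_j. -/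
/-!
Replace `x i` by the potential `Φ i = (1 + (ε / 3) / √2 ^ i) * x i`. The excess `(ε / 3) / √2 ^ i`
decays geometrically, and one step of this decay absorbs the error factor `1 + ε / (13 * √2 ^ i)`
of the recursion, so `Φ` satisfies the error-free inequality `2 * Φ (i + 1) + f i ≤ Φ i`, which
telescopes after weighting by `2 ^ (i - j)`.
-/

theorem pow_mul_add_sum_Ico_le_of_mul_succ_add_le {R : Type*} [Semiring R] [PartialOrder R]
    [IsOrderedRing R] {b : R} (hb : 0 ≤ b) {Φ f : ℕ → R} {j K : ℕ} (hjK : j ≤ K)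
    (hstep : ∀ i, j ≤ i → i < K → b * Φ (i + 1) + f i ≤ Φ i) :
    b ^ (K - j) * Φ K + ∑ i ∈ Finset.Ico j K, b ^ (i - j) * f i ≤ Φ j := by
  induction K, hjK using Nat.le_induction with
  | base => simp
  | succ K hjK ih =>
    calc b ^ (K + 1 - j) * Φ (K + 1) + ∑ i ∈ Finset.Ico j (K + 1), b ^ (i - j) * f i
        = b ^ (K - j) * (b * Φ (K + 1) + f K) + ∑ i ∈ Finset.Ico j K, b ^ (i - j) * f i := by
          rw [Finset.sum_Ico_succ_top hjK, Nat.succ_sub hjK, pow_succ, mul_add, mul_assoc]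
          abel
      _ ≤ b ^ (K - j) * Φ K + ∑ i ∈ Finset.Ico j K, b ^ (i - j) * f i := by
          gcongr
          exact hstep K hjK K.lt_succ_self
      _ ≤ Φ j := ih fun i hji hiK => hstep i hji (hiK.trans K.lt_succ_self)

theorem mul_mul_add_le_mul_of_mul_le {R : Type*} [CommSemiring R] [PartialOrder R]
    [IsOrderedRing R] {b c c' r x x' f : R} (hc' : 1 ≤ c') (hcr : c' * r ≤ c)
    (hx : 0 ≤ x) (hf : 0 ≤ f) (hstep : b * x' + f ≤ r * x) :
    b * (c' * x') + f ≤ c * x :=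
  calc b * (c' * x') + f ≤ b * (c' * x') + c' * f := by
        gcongr
        exact le_mul_of_one_le_left hf hc'
    _ = c' * (b * x' + f) := by ring
    _ ≤ c' * (r * x) := mul_le_mul_of_nonneg_left hstep (zero_le_one.trans hc')
    _ = c' * r * x := (mul_assoc ..).symm
    _ ≤ c * x := mul_le_mul_of_nonneg_right hcr hx

theorem one_add_mul_mul_one_add_mul_le {R : Type*} [CommSemiring R] [PartialOrder R]
    [IsOrderedRing R] {p q s t : R} (hpq : 0 ≤ p * q) (hs : p + q + p * q ≤ s)
    (ht₀ : 0 ≤ t) (ht₁ : t ≤ 1) :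
    (1 + p * t) * (1 + q * t) ≤ 1 + s * t :=
  calc (1 + p * t) * (1 + q * t) = 1 + (p + q + p * q * t) * t := by ring
    _ ≤ 1 + (p + q + p * q) * t := by
        gcongr 1 + (p + q + ?_) * t
        exact mul_le_of_le_one_right hpq ht₁
    _ ≤ 1 + s * t := by gcongr

theorem inv_sqrt_two_le_five_div_seven : (√2)⁻¹ ≤ 5 / 7 := by
  have h : (7 / 5 : ℝ) ≤ √2 := Real.le_sqrt_of_sq_le (by norm_num)
  simpa only [inv_div] using inv_anti₀ (by norm_num) h

theorem correction_succ_mul_error_le_correction {ε : ℝ} {i : ℕ} (hε₀ : 0 ≤ ε) (hε₁ : ε ≤ √2 ^ i) :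
    (1 + (ε / 3) / √2 ^ (i + 1)) * (1 + ε / (13 * √2 ^ i)) ≤ 1 + (ε / 3) / √2 ^ i := by
  -- The constant 13 is calibrated to `(√2)⁻¹ ≤ 5 / 7`: `5/21 + 1/13 + 5/21 * 1/13 = 1/3`.
  have hconst : (√2)⁻¹ / 3 + 1 / 13 + (√2)⁻¹ / 3 * (1 / 13) ≤ (1 / 3 : ℝ) := by
    linarith [inv_sqrt_two_le_five_div_seven]
  have ht₀ : 0 ≤ ε / √2 ^ i := by positivity
  have ht₁ : ε / √2 ^ i ≤ 1 := div_le_one_of_le₀ hε₁ (by positivity)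
  calc (1 + (ε / 3) / √2 ^ (i + 1)) * (1 + ε / (13 * √2 ^ i))
      = (1 + (√2)⁻¹ / 3 * (ε / √2 ^ i)) * (1 + 1 / 13 * (ε / √2 ^ i)) := by
        rw [pow_succ]
        field_simp
    _ ≤ 1 + 1 / 3 * (ε / √2 ^ i) :=
        one_add_mul_mul_one_add_mul_le (by positivity) hconst ht₀ ht₁
    _ = 1 + (ε / 3) / √2 ^ i := by ring

theorem telescoping_upper_bound_general {j K : ℕ} (hjK : j ≤ K) {ε : ℝ} (hε₀ : 0 ≤ ε)
    (hε₁ : ε ≤ √2 ^ j) {x f : ℕ → ℝ} {y : ℝ}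
    (hx : ∀ i, j ≤ i → i ≤ K → 0 ≤ x i)
    (hf : ∀ i, j ≤ i → i < K → 0 ≤ f i)
    (hsum : y + f K = x K)
    (hstep : ∀ i, j ≤ i → i < K → 2 * x (i + 1) + f i ≤ (1 + ε / (13 * √2 ^ i)) * x i) :
    (2 : ℝ) ^ (K - j) * y + ∑ i ∈ Finset.Icc j K, (2 : ℝ) ^ (i - j) * f i ≤
      (1 + (ε / 3) / √2 ^ j) * x j := by
  let c (i : ℕ) : ℝ := 1 + (ε / 3) / √2 ^ i
  have one_le_c (i : ℕ) : 1 ≤ c i := le_add_of_nonneg_right (by positivity)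
  have hΦ (i : ℕ) (hji : j ≤ i) (hiK : i < K) : 2 * (c (i + 1) * x (i + 1)) + f i ≤ c i * x i :=
    have hεi : ε ≤ √2 ^ i := hε₁.trans (pow_le_pow_right₀ (Real.one_le_sqrt.2 one_le_two) hji)
    mul_mul_add_le_mul_of_mul_le (one_le_c (i + 1))
      (correction_succ_mul_error_le_correction hε₀ hεi)
      (hx i hji hiK.le) (hf i hji hiK) (hstep i hji hiK)
  calc (2 : ℝ) ^ (K - j) * y + ∑ i ∈ Finset.Icc j K, (2 : ℝ) ^ (i - j) * f i
      = 2 ^ (K - j) * x K + ∑ i ∈ Finset.Ico j K, 2 ^ (i - j) * f i := by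
        rw [← Finset.sum_Ico_add_eq_sum_Icc hjK, ← hsum]
        ring
    _ ≤ 2 ^ (K - j) * (c K * x K) + ∑ i ∈ Finset.Ico j K, 2 ^ (i - j) * f i := by
        gcongr
        exact le_mul_of_one_le_left (hx K hjK le_rfl) (one_le_c K)
    _ ≤ c j * x j :=
        pow_mul_add_sum_Ico_le_of_mul_succ_add_le (Φ := fun i => c i * x i) zero_le_two hjK hΦ

theorem telescoping_upper_bound (j K : ℕ) (hjK : j ≤ K) (ε : ℝ) (hε0 : 0 < ε) (hε1 : ε ≤ 1)
    (x f : ℕ → ℝ) (y : ℝ)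
    (hx : ∀ i, j ≤ i → i ≤ K → 0 ≤ x i)
    (hf : ∀ i, j ≤ i → i ≤ K → 0 ≤ f i)
    (hy : 0 ≤ y)
    (hsum : y + f K = x K)
    (hstep : ∀ i, j ≤ i → i < K →
      2 * x (i + 1) + f i ≤ (1 + ε / (13 * Real.sqrt 2 ^ i)) * x i) :
    (2 : ℝ) ^ (K - j) * y + ∑ i ∈ Finset.Icc j K, (2 : ℝ) ^ (i - j) * f i ≤
      (1 + (ε / 3) / Real.sqrt 2 ^ j) * x j :=
  have hεj : ε ≤ √2 ^ j := hε1.trans (one_le_pow₀ (Real.one_le_sqrt.2 one_le_two))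
  telescoping_upper_bound_general hjK hε0.le hεj hx (fun i hji hiK => hf i hji hiK.le) hsum hstep
end

section
/- Let V be a finite vertex set, let j ≤ K be natural numbers, and let ε be a real number with 0 < ε ≤ 1. For each i with j ≤ i ≤ K let X_i and F_i be finite sets of edges on V, and let Y_K be a finite set of edges on V, such that X_K is the disjoint union of F_K and Y_K. Suppose that for every subset S ⊆ V and every i with j ≤ i ≤ K−1, |2·c(X_{i+1},S) + c(F_i,S) − c(X_i,S)| ≤ (ε/(13·2^{i/2}))·c(X_i,S). Then for every subset S ⊆ V, |∑_{i=j}^{K} 2^{i−j}·c(F_i,S) + 2^{K−j}·c(Y_K,S) − c(X_j,S)| ≤ (ε/3)·2^{−j/2}·c(X_j,S). -/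
open Classical in
/-- The number of edges of `E` crossing the cut determined by `S`,
viewed as a real number. -/
noncomputable def cutCount {V : Type*} [Fintype V] [DecidableEq V]
    (E : Finset (Sym2 V)) (S : Finset V) : ℝ :=
  (E.filter (fun e => ∃ u v, e = s(u, v) ∧ u ∈ S ∧ v ∉ S)).card

/-!
Write `A i` for the sum `∑ k ∈ [i, K], 2 ^ (k - i) * c(F k, S) + 2 ^ (K - i) * c(Y, S)`. It
satisfies the Horner recursion `A i = c(F i, S) + 2 * A (i + 1)`, while `c(X i, S)` satisfies the
same recursion up to a relative error `δ i`. Since `c(F i, S) ≥ 0`, one also has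
`2 * c(X (i + 1), S) ≤ (1 + δ i) * c(X i, S)`, so a relative error `η (i + 1)` at level `i + 1`
becomes at most `δ i + η (i + 1) * (1 + δ i)` at level `i`. The choice `η i = (ε / 3) / √2 ^ i`
majorizes this recursion when `δ i = ε / (13 * √2 ^ i)`.
-/

lemma cutCount_nonneg {V : Type*} [Fintype V] [DecidableEq V]
    (E : Finset (Sym2 V)) (S : Finset V) : 0 ≤ cutCount E S :=
  Nat.cast_nonneg _

lemma cutCount_union_of_disjoint {V : Type*} [Fintype V] [DecidableEq V]
    {E E' : Finset (Sym2 V)} (h : Disjoint E E') (S : Finset V) :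
    cutCount (E ∪ E') S = cutCount E S + cutCount E' S := by
  unfold cutCount
  rw [Finset.filter_union, Finset.card_union_of_disjoint (Finset.disjoint_filter_filter h),
    Nat.cast_add]

lemma sum_Icc_pow_sub_mul_add_eq {R : Type*} [Semiring R] (a : R) (f : ℕ → R) (y : R)
    {j K : ℕ} (hjK : j < K) :
    (∑ i ∈ Finset.Icc j K, a ^ (i - j) * f i) + a ^ (K - j) * y =
      f j + a * ((∑ i ∈ Finset.Icc (j + 1) K, a ^ (i - (j + 1)) * f i) +
        a ^ (K - (j + 1)) * y) := by
  have mul_shift (i : ℕ) (hi : j + 1 ≤ i) (z : R) :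
      a ^ (i - j) * z = a * (a ^ (i - (j + 1)) * z) := by
    rw [← mul_assoc, ← pow_succ', show i - (j + 1) + 1 = i - j by lia]
  have sum_shift : ∑ i ∈ Finset.Icc (j + 1) K, a ^ (i - j) * f i =
      a * ∑ i ∈ Finset.Icc (j + 1) K, a ^ (i - (j + 1)) * f i := by
    rw [Finset.mul_sum]
    exact Finset.sum_congr rfl fun i hi ↦ mul_shift i (Finset.mem_Icc.mp hi).1 (f i)
  rw [← Finset.add_sum_Ioc_eq_sum_Icc hjK.le, ← Finset.Icc_add_one_left_eq_Ioc, sum_shift,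
    mul_shift K hjK, Nat.sub_self, pow_zero, one_mul, mul_add, add_assoc]

section RelativeError

variable {R : Type*} [CommRing R] [LinearOrder R] [IsStrictOrderedRing R]

lemma abs_add_mul_sub_le_of_relative_error {a A x x' f δ η η' : R} (ha : 0 ≤ a) (hx : 0 ≤ x)
    (hf : 0 ≤ f) (hη' : 0 ≤ η') (hη : δ + η' * (1 + δ) ≤ η)
    (hstep : |a * x' + f - x| ≤ δ * x) (hA : |A - x'| ≤ η' * x') :
    |f + a * A - x| ≤ η * x := by
  have growth : a * x' ≤ (1 + δ) * x := by linarith [(abs_le.mp hstep).2]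
  calc
    |f + a * A - x| = |a * (A - x') + (a * x' + f - x)| := by ring_nf
    _ ≤ |a * (A - x')| + |a * x' + f - x| := abs_add_le _ _
    _ = a * |A - x'| + |a * x' + f - x| := by rw [abs_mul, abs_of_nonneg ha]
    _ ≤ a * (η' * x') + δ * x := by gcongr
    _ = η' * (a * x') + δ * x := by ring
    _ ≤ η' * ((1 + δ) * x) + δ * x := by gcongr
    _ = (δ + η' * (1 + δ)) * x := by ring
    _ ≤ η * x := by gcongr

lemma abs_sum_Icc_pow_mul_add_sub_le {a y : R} {x f δ η : ℕ → R} {j K : ℕ} (hjK : j ≤ K)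
    (ha : 0 ≤ a) (hx : ∀ i, 0 ≤ x i) (hf : ∀ i, 0 ≤ f i) (hη : ∀ i, 0 ≤ η i)
    (hδη : ∀ i, δ i + η (i + 1) * (1 + δ i) ≤ η i)
    (hstep : ∀ i, j ≤ i → i < K → |a * x (i + 1) + f i - x i| ≤ δ i * x i)
    (hK : x K = f K + y) :
    |(∑ i ∈ Finset.Icc j K, a ^ (i - j) * f i) + a ^ (K - j) * y - x j| ≤ η j * x j := by
  refine Nat.decreasingInduction'
    (P := fun m ↦
      |(∑ i ∈ Finset.Icc m K, a ^ (i - m) * f i) + a ^ (K - m) * y - x m| ≤ η m * x m)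
    (fun i hiK hji ih ↦ ?_) hjK ?_
  · rw [sum_Icc_pow_sub_mul_add_eq a f y hiK]
    exact abs_add_mul_sub_le_of_relative_error ha (hx i) (hf i) (hη (i + 1)) (hδη i)
      (hstep i hji hiK) ih
  · simpa [hK] using mul_nonneg (hη K) (hx K)

end RelativeError

/-- The constant `13` fits the bound `1 / √2 ≤ 5 / 7` exactly:
`1 / 13 + 1 / 3 * (5 / 7) * (1 + 1 / 13) = 1 / 3`. -/
lemma geometric_relative_error_step {ε : ℝ} (hε0 : 0 ≤ ε) (hε1 : ε ≤ 1) (i : ℕ) :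
    ε / (13 * √2 ^ i) + ε / 3 / √2 ^ (i + 1) * (1 + ε / (13 * √2 ^ i)) ≤ ε / 3 / √2 ^ i := by
  have inv_sqrt_two_le : (√2)⁻¹ ≤ 5 / 7 := by
    rw [inv_le_comm₀ (by positivity) (by norm_num)]
    exact Real.le_sqrt_of_sq_le (by norm_num)
  set t := ε / √2 ^ i with ht
  have t_le_one : t ≤ 1 :=
    div_le_one_of_le₀ (hε1.trans (one_le_pow₀ (Real.one_le_sqrt.mpr one_le_two))) (by positivity)
  calc
    _ = t / 13 + t / 3 * (√2)⁻¹ * (1 + t / 13) := by rw [ht, pow_succ]; ring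
    _ ≤ t / 13 + t / 3 * (5 / 7) * (1 + 1 / 13) := by gcongr
    _ = t / 3 := by ring
    _ = ε / 3 / √2 ^ i := by rw [ht]; ring

theorem cut_approx_accumulates {V : Type*} [Fintype V] [DecidableEq V]
    (j K : ℕ) (hjK : j ≤ K) (ε : ℝ) (hε0 : 0 < ε) (hε1 : ε ≤ 1)
    (X F : ℕ → Finset (Sym2 V)) (Y : Finset (Sym2 V))
    (hXd : ∀ i, j ≤ i → i ≤ K → ∀ e ∈ X i, ¬ e.IsDiag)
    (hFd : ∀ i, j ≤ i → i ≤ K → ∀ e ∈ F i, ¬ e.IsDiag)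
    (hYd : ∀ e ∈ Y, ¬ e.IsDiag)
    (hdisj : Disjoint (F K) Y)
    (hunion : X K = F K ∪ Y)
    (hstep : ∀ S : Finset V, ∀ i, j ≤ i → i < K →
      |2 * cutCount (X (i + 1)) S + cutCount (F i) S - cutCount (X i) S| ≤
        (ε / (13 * Real.sqrt 2 ^ i)) * cutCount (X i) S) :
    ∀ S : Finset V,
      |(∑ i ∈ Finset.Icc j K, (2 : ℝ) ^ (i - j) * cutCount (F i) S) +
          (2 : ℝ) ^ (K - j) * cutCount Y S - cutCount (X j) S| ≤
        (ε / 3) / Real.sqrt 2 ^ j * cutCount (X j) S := by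
  intro S
  have cut_top : cutCount (X K) S = cutCount (F K) S + cutCount Y S := by
    rw [hunion, cutCount_union_of_disjoint hdisj]
  exact abs_sum_Icc_pow_mul_add_sub_le (η := fun i ↦ ε / 3 / √2 ^ i) hjK zero_le_two
    (fun i ↦ cutCount_nonneg (X i) S) (fun i ↦ cutCount_nonneg (F i) S)
    (fun i ↦ by positivity) (geometric_relative_error_step hε0.le hε1) (hstep S) cut_top
end
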